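/- arXiv:1311.2020 — 3 statements merged into one kernel-verified Lean document; each statement's English description precedes it below -/
import Mathlib

section
/- For every smooth compactly supported function v : ℂ → ℂ and every C²-smooth φ : ℂ → ℝ with Δ̂φ > 0 everywhere, one has the inequality 2 ∫_ℂ |v|² Δ̂φ dA ≤ ∫_ℂ |∂̄v - v·∂̄φ|² dA. -/
open MeasureTheory Complex Real Filter Topology

/-- Wirtinger derivative ∂̄ = (∂ₓ + i ∂_y)/2. -/
noncomputable def dbar (f : ℂ → ℂ) (z : ℂ) : ℂ :=
  (fderiv ℝ f z 1 + Complex.I * fderiv ℝ f z Complex.I) / 2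

/-- Wirtinger derivative ∂ = (∂ₓ - i ∂_y)/2. -/
noncomputable def dee (f : ℂ → ℂ) (z : ℂ) : ℂ :=
  (fderiv ℝ f z 1 - Complex.I * fderiv ℝ f z Complex.I) / 2

/-- ∂̄ applied to a real-valued function (viewed as complex-valued). -/
noncomputable def dbarR (φ : ℂ → ℝ) (z : ℂ) : ℂ := dbar (fun w => (φ w : ℂ)) z

/-- ∂ applied to a real-valued function (viewed as complex-valued). -/
noncomputable def deeR (φ : ℂ → ℝ) (z : ℂ) : ℂ := dee (fun w => (φ w : ℂ)) z

/-- Normalized Laplacian Δ̂ = (∂ₓ² + ∂_y²)/4. -/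
noncomputable def lapHat (φ : ℂ → ℝ) (z : ℂ) : ℝ :=
  (fderiv ℝ (fun w => fderiv ℝ φ w 1) z 1 +
   fderiv ℝ (fun w => fderiv ℝ φ w Complex.I) z Complex.I) / 4

/-- `u` solves `∂̄ u = f` in the sense of distributions. -/
def IsDbarSol (u f : ℂ → ℂ) : Prop :=
  ∀ ψ : ℂ → ℂ, ContDiff ℝ (⊤ : ℕ∞) ψ → HasCompactSupport ψ →
    ∫ z : ℂ, f z * ψ z = -∫ z : ℂ, u z * dbar ψ z


lemma aux_int (g : ℂ → ℝ) (hg : ContDiff ℝ 1 g) (hc : HasCompactSupport g) (w : ℂ) :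
    Integrable (fun z => fderiv ℝ g z w) ∧ ∫ z : ℂ, fderiv ℝ g z w = 0 := by
  have h1 : Integrable (fun z => fderiv ℝ g z w) := by
    apply Continuous.integrable_of_hasCompactSupport
    · exact (hg.continuous_fderiv (by norm_num)).clm_apply continuous_const
    · exact hc.fderiv_apply ℝ w
  refine ⟨h1, ?_⟩
  have := integral_mul_fderiv_eq_neg_fderiv_mul_of_integrable (μ := (volume : Measure ℂ))
    (f := fun _ : ℂ => (1:ℝ)) (g := g) (v := w) (by simp) (by simpa using h1)
    (by simpa using hg.continuous.integrable_of_hasCompactSupport hc)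
    (by fun_prop) (fun x _ => hg.differentiable (by norm_num) x)
  simpa using this

lemma aux_symm (b : ℂ → ℝ) (hb : ContDiff ℝ 2 b) (z s t : ℂ) :
    fderiv ℝ (fun w => fderiv ℝ b w s) z t = fderiv ℝ (fun w => fderiv ℝ b w t) z s := by
  have hd : DifferentiableAt ℝ (fderiv ℝ b) z :=
    ((hb.fderiv_right (m := 1) (by norm_num)).differentiable (by norm_num)) z
  have hs : IsSymmSndFDerivAt ℝ b z := hb.contDiffAt.isSymmSndFDerivAt (by simp)
  rw [fderiv_clm_apply hd (by fun_prop), fderiv_clm_apply hd (by fun_prop)]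
  simpa using hs t s

lemma aux_cd (b : ℂ → ℝ) (hb : ContDiff ℝ 2 b) (s : ℂ) :
    ContDiff ℝ 1 (fun w => fderiv ℝ b w s) :=
  (hb.fderiv_right (m := 1) (by norm_num)).clm_apply contDiff_const

lemma aux_div (a b P c : ℂ → ℝ) (z w : ℂ) (ha : DifferentiableAt ℝ a z)
    (hb : DifferentiableAt ℝ b z) (hP : DifferentiableAt ℝ P z) (hc : DifferentiableAt ℝ c z) :
    fderiv ℝ (fun z => (a z ^ 2 + b z ^ 2) * P z / 2 + a z * c z) z w =
      (a z * fderiv ℝ a z w + b z * fderiv ℝ b z w) * P z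
      + (a z ^ 2 + b z ^ 2) * fderiv ℝ P z w / 2
      + fderiv ℝ a z w * c z + a z * fderiv ℝ c z w := by
  have h := ((((ha.hasFDerivAt.pow 2).add (hb.hasFDerivAt.pow 2)).mul hP.hasFDerivAt).mul_const
    (2⁻¹ : ℝ)).add (ha.hasFDerivAt.mul hc.hasFDerivAt)
  have h2 : HasFDerivAt (fun z => (a z ^ 2 + b z ^ 2) * P z / 2 + a z * c z) _ z := h
  rw [h2.fderiv]
  simp
  ring

theorem stmt2 (v : ℂ → ℂ) (hv : ContDiff ℝ (⊤ : ℕ∞) v) (hvc : HasCompactSupport v)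
    (φ : ℂ → ℝ) (hφ : ContDiff ℝ 2 φ) (hpos : ∀ z, 0 < lapHat φ z) :
    2 * (∫ z : ℂ, ‖v z‖ ^ 2 * lapHat φ z) ≤
      ∫ z : ℂ, ‖dbar v z - v z * dbarR φ z‖ ^ 2 := by
  have hv2 : ContDiff ℝ 2 v := (contDiff_infty.1 hv) 2
  have ha : ContDiff ℝ 2 (fun z => (v z).re) := Complex.reCLM.contDiff.comp hv2
  have hb : ContDiff ℝ 2 (fun z => (v z).im) := Complex.imCLM.contDiff.comp hv2
  set a : ℂ → ℝ := fun z => (v z).re with ha_def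
  set b : ℂ → ℝ := fun z => (v z).im with hb_def
  have hac : HasCompactSupport a := hvc.comp_left (g := Complex.re) rfl
  have hbc : HasCompactSupport b := hvc.comp_left (g := Complex.im) rfl
  have hvd : Differentiable ℝ v := hv2.differentiable (by norm_num)
  have had : Differentiable ℝ a := ha.differentiable (by norm_num)
  have hbd : Differentiable ℝ b := hb.differentiable (by norm_num)
  have hφd : Differentiable ℝ φ := hφ.differentiable (by norm_num)
  have fa : ∀ z w, (fderiv ℝ v z w).re = fderiv ℝ a z w := by
    intro z w
    have : HasFDerivAt a _ z := Complex.reCLM.hasFDerivAt.comp z (hvd z).hasFDerivAt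
    rw [this.fderiv]; simp
  have fb : ∀ z w, (fderiv ℝ v z w).im = fderiv ℝ b z w := by
    intro z w
    have : HasFDerivAt b _ z := Complex.imCLM.hasFDerivAt.comp z (hvd z).hasFDerivAt
    rw [this.fderiv]; simp
  have fφ : ∀ z w, fderiv ℝ (fun w => (φ w : ℂ)) z w = (fderiv ℝ φ z w : ℂ) := by
    intro z w
    have : HasFDerivAt (fun w => (φ w : ℂ)) _ z :=
      Complex.ofRealCLM.hasFDerivAt.comp z (hφd z).hasFDerivAt
    rw [this.fderiv]; simp
  have hP := aux_cd φ hφ 1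
  have hQ := aux_cd φ hφ Complex.I
  have hbx := aux_cd b hb 1
  have hby := aux_cd b hb Complex.I
  have ha1 : ContDiff ℝ 1 a := ha.of_le (by norm_num)
  have hb1 : ContDiff ℝ 1 b := hb.of_le (by norm_num)
  have key : ∀ (P c : ℂ → ℝ), ContDiff ℝ 1 P → ContDiff ℝ 1 c → 
      ContDiff ℝ 1 (fun z => (a z ^ 2 + b z ^ 2) * P z / 2 + a z * c z) ∧
      HasCompactSupport (fun z => (a z ^ 2 + b z ^ 2) * P z / 2 + a z * c z) := by
    intro P c hP hc
    refine ⟨by fun_prop, ?_⟩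
    refine hvc.mono ?_
    intro z hz hz0
    apply hz
    simp [ha_def, hb_def, hz0]
  obtain ⟨hG, hGc⟩ := key _ _ hP hby
  obtain ⟨hH, hHc⟩ := key _ _ hQ hbx.neg
  obtain ⟨iG, zG⟩ := aux_int _ hG hGc 1
  obtain ⟨iH, zH⟩ := aux_int _ hH hHc Complex.I
  have hlap : Continuous (lapHat φ) := by
    unfold lapHat
    exact (((hP.continuous_fderiv (by norm_num)).clm_apply continuous_const).add
      ((hQ.continuous_fderiv (by norm_num)).clm_apply continuous_const)).div_const _
  have iL : Integrable (fun z => ‖v z‖ ^ 2 * lapHat φ z) := by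
    apply Continuous.integrable_of_hasCompactSupport
    · exact (hv2.continuous.norm.pow 2).mul hlap
    · refine hvc.mono ?_
      intro z hz hz0
      apply hz
      simp [hz0]
  have iR : Integrable (fun z => ‖dbar v z - v z * dbarR φ z‖ ^ 2) := by
    have c1 : Continuous (fderiv ℝ v) := hv2.continuous_fderiv (by norm_num)
    have c2 := hP.continuous
    have c3 := hQ.continuous
    have c4 := hv2.continuous
    apply Continuous.integrable_of_hasCompactSupport
    · unfold dbarR dbar
      simp only [fφ]
      fun_prop
    · have hs : HasCompactSupport (fun z => ‖dbar v z - v z * dbarR φ z‖) := by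
        apply HasCompactSupport.norm
        apply HasCompactSupport.sub
        · refine (hvc.fderiv ℝ).mono ?_
          intro z hz hz0
          apply hz
          simp [dbar, hz0]
        · exact hvc.mul_right
      exact hs.comp_left (g := fun x : ℝ => x ^ 2) (by simp)
  have hpt : ∀ z, 2 * (‖v z‖ ^ 2 * lapHat φ z)
      - fderiv ℝ (fun z => (a z ^ 2 + b z ^ 2) * fderiv ℝ φ z 1 / 2
          + a z * fderiv ℝ b z Complex.I) z 1
      - fderiv ℝ (fun z => (a z ^ 2 + b z ^ 2) * fderiv ℝ φ z Complex.I / 2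
          + a z * -(fderiv ℝ b z 1)) z Complex.I ≤ ‖dbar v z - v z * dbarR φ z‖ ^ 2 := by
    intro z
    rw [aux_div a b _ _ z _ (had z) (hbd z) (hP.differentiable (by norm_num) z)
      (hby.differentiable (by norm_num) z),
      aux_div a b _ _ z _ (had z) (hbd z) (hQ.differentiable (by norm_num) z)
      (hbx.neg.differentiable (by norm_num) z)]
    have hn : fderiv ℝ (fun z => -(fderiv ℝ b z 1)) z Complex.I
        = - fderiv ℝ (fun w => fderiv ℝ b w Complex.I) z 1 := by
      rw [← aux_symm b hb z 1 Complex.I, fderiv_fun_neg]; rfl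
    rw [hn]
    have e1 : ‖v z‖ ^ 2 = a z ^ 2 + b z ^ 2 := by
      rw [← Complex.normSq_eq_norm_sq, Complex.normSq_apply]; ring
    have e2 : ‖dbar v z - v z * dbarR φ z‖ ^ 2 =
        ((fderiv ℝ a z 1 - fderiv ℝ b z Complex.I) / 2
          - (a z * fderiv ℝ φ z 1 - b z * fderiv ℝ φ z Complex.I) / 2) ^ 2
        + ((fderiv ℝ b z 1 + fderiv ℝ a z Complex.I) / 2
          - (a z * fderiv ℝ φ z Complex.I + b z * fderiv ℝ φ z 1) / 2) ^ 2 := by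
      rw [← Complex.normSq_eq_norm_sq, Complex.normSq_apply]
      simp [dbar, dbarR, fφ, fa, fb]
      ring
    rw [e1, e2, lapHat]
    have h1 := sq_nonneg ((fderiv ℝ a z 1 + fderiv ℝ b z Complex.I) / 2
          + (a z * fderiv ℝ φ z 1 + b z * fderiv ℝ φ z Complex.I) / 2)
    have h2 := sq_nonneg ((fderiv ℝ b z 1 - fderiv ℝ a z Complex.I) / 2
          + (b z * fderiv ℝ φ z 1 - a z * fderiv ℝ φ z Complex.I) / 2)
    linarith
  have := integral_mono (((iL.const_mul 2).sub iG).sub iH) iR hpt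
  have e : ∫ z : ℂ, ((((fun z => 2 * (‖v z‖ ^ 2 * lapHat φ z)) - _) - _) : ℂ → ℝ) z = _ :=
    integral_sub' ((iL.const_mul 2).sub iG) iH
  rw [e, integral_sub' (iL.const_mul 2) iG, zG, zH, integral_const_mul] at this
  linarith
end

section
/- Let φ : ℂ → ℝ be C⁴-smooth with Δφ > 0 everywhere and satisfying (1/Δφ)·Δ log Δφ ≥ -2 on ℂ. If F : ℂ → ℂ is a nontrivial entire function, then the function log(|F|² e^{2φ} Δφ) is subharmonic on ℂ in the sense of distributions, and hence |F|² e^{2φ} Δφ is subharmonic on ℂ. -/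
open MeasureTheory Complex Real Filter Topology

/-- Subharmonicity in the sense of distributions. -/
def SubharmonicDistrib (w : ℂ → ℝ) : Prop :=
  LocallyIntegrable w volume ∧
    ∀ ψ : ℂ → ℝ, ContDiff ℝ (⊤ : ℕ∞) ψ → HasCompactSupport ψ → (∀ z, 0 ≤ ψ z) →
      0 ≤ ∫ z : ℂ, w z * lapHat ψ z

/-- Subharmonicity via the sub-mean value property. -/
def SubharmonicSMV (w : ℂ → ℝ) : Prop :=
  UpperSemicontinuous w ∧
    ∀ (z₀ : ℂ) (r : ℝ), 0 < r →
      w z₀ ≤ (1 / (Real.pi * r ^ 2)) * ∫ z in Metric.ball z₀ r, w z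


/-- first directional derivative -/
noncomputable def dd (u : ℂ → ℝ) (v : ℂ) (z : ℂ) : ℝ := fderiv ℝ u z v

lemma lapHat_eq (u : ℂ → ℝ) (z : ℂ) :
    lapHat u z = (dd (dd u 1) 1 z + dd (dd u Complex.I) Complex.I z) / 4 := rfl

lemma contDiff_dd {n : ℕ} {u : ℂ → ℝ} (hu : ContDiff ℝ (n + 1 : ℕ) u) (v : ℂ) :
    ContDiff ℝ n (dd u v) := by
  unfold dd
  exact (hu.fderiv_right (m := n) (by norm_cast)).clm_apply contDiff_const

lemma contDiff_lapHat {n : ℕ} {u : ℂ → ℝ} (hu : ContDiff ℝ (n + 2 : ℕ) u) :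
    ContDiff ℝ n (lapHat u) := by
  have h1 := contDiff_dd (contDiff_dd (n := n + 1) hu 1) 1
  have h2 := contDiff_dd (contDiff_dd (n := n + 1) hu Complex.I) Complex.I
  exact (h1.add h2).div_const 4

lemma dd_add {u w : ℂ → ℝ} (hu : Differentiable ℝ u) (hw : Differentiable ℝ w) (v : ℂ) :
    dd (fun z => u z + w z) v = fun z => dd u v z + dd w v z := by
  funext z
  simp [dd, fderiv_fun_add (hu z) (hw z)]

lemma lapHat_add {u w : ℂ → ℝ} (hu : ContDiff ℝ 2 u) (hw : ContDiff ℝ 2 w) (z : ℂ) :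
    lapHat (fun z => u z + w z) z = lapHat u z + lapHat w z := by
  have du := hu.differentiable (by norm_num)
  have dw := hw.differentiable (by norm_num)
  have d1 : ∀ v, Differentiable ℝ (dd u v) := fun v =>
    (contDiff_dd (n := 1) hu v).differentiable (by norm_num)
  have d2 : ∀ v, Differentiable ℝ (dd w v) := fun v =>
    (contDiff_dd (n := 1) hw v).differentiable (by norm_num)
  simp only [lapHat_eq, dd_add du dw]
  rw [dd_add (d1 1) (d2 1), dd_add (d1 _) (d2 _)]
  ring

lemma dd_const_mul {u : ℂ → ℝ} (hu : Differentiable ℝ u) (c : ℝ) (v : ℂ) :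
    dd (fun z => c * u z) v = fun z => c * dd u v z := by
  funext z
  simp [dd, fderiv_const_mul (hu z) c]

lemma lapHat_const_mul {u : ℂ → ℝ} (hu : ContDiff ℝ 2 u) (c : ℝ) (z : ℂ) :
    lapHat (fun z => c * u z) z = c * lapHat u z := by
  have du := hu.differentiable (by norm_num)
  have d1 : ∀ v, Differentiable ℝ (dd u v) := fun v =>
    (contDiff_dd (n := 1) hu v).differentiable (by norm_num)
  simp only [lapHat_eq, dd_const_mul du]
  rw [dd_const_mul (d1 1), dd_const_mul (d1 _)]
  ring

lemma dd_mul {u w : ℂ → ℝ} (hu : Differentiable ℝ u) (hw : Differentiable ℝ w) (v : ℂ) (z : ℂ) :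
    dd (fun z => u z * w z) v z = u z * dd w v z + w z * dd u v z := by
  simp [dd, fderiv_fun_mul (hu z) (hw z)]

lemma dd_comp {u : ℂ → ℝ} (hu : Differentiable ℝ u) {g g' : ℝ → ℝ}
    (hg : ∀ z, HasDerivAt g (g' (u z)) (u z)) (v : ℂ) :
    dd (fun z => g (u z)) v = fun z => g' (u z) * dd u v z := by
  funext z
  have := ((hg z).comp_hasFDerivAt z (hu z).hasFDerivAt).fderiv
  simp only [dd]
  rw [show (fun z => g (u z)) = g ∘ u from rfl, this]
  simp

lemma lapHat_comp {u : ℂ → ℝ} (hu : ContDiff ℝ 2 u) {g g' g'' : ℝ → ℝ}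
    (hg : ∀ z, HasDerivAt g (g' (u z)) (u z)) (hg' : ∀ z, HasDerivAt g' (g'' (u z)) (u z))
    (z : ℂ) :
    lapHat (fun z => g (u z)) z = g' (u z) * lapHat u z +
      g'' (u z) * ((dd u 1 z) ^ 2 + (dd u Complex.I z) ^ 2) / 4 := by
  have du := hu.differentiable (by norm_num)
  have d1 : ∀ v, Differentiable ℝ (dd u v) := fun v =>
    (contDiff_dd (n := 1) hu v).differentiable (by norm_num)
  have dg : Differentiable ℝ (fun z => g' (u z)) := fun z =>
    ((hg' z).differentiableAt).comp z (du z)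
  simp only [lapHat_eq, dd_comp du hg]
  rw [dd_mul dg (d1 1), dd_mul dg (d1 _), dd_comp du hg' 1, dd_comp du hg']
  ring

lemma lapHat_exp_nonneg {u : ℂ → ℝ} (hu : ContDiff ℝ 2 u) (h : ∀ z, 0 ≤ lapHat u z) (z : ℂ) :
    0 ≤ lapHat (fun z => Real.exp (u z)) z := by
  rw [lapHat_comp hu (g' := Real.exp) (g'' := Real.exp) (fun z => Real.hasDerivAt_exp _)
    (fun z => Real.hasDerivAt_exp _)]
  have := h z
  positivity

lemma dd_re {G : ℂ → ℂ} (hG : Differentiable ℂ G) (v : ℂ) (z : ℂ) :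
    dd (fun z => (G z).re) v z = (deriv G z * v).re := by
  have h := ((hG z).hasDerivAt.hasFDerivAt.restrictScalars ℝ)
  have h2 := (Complex.reCLM.hasFDerivAt.comp z h).fderiv
  simp only [dd]
  rw [show (fun z => (G z).re) = Complex.reCLM ∘ G from rfl, h2]
  simp [mul_comm]

lemma dd_im {G : ℂ → ℂ} (hG : Differentiable ℂ G) (v : ℂ) (z : ℂ) :
    dd (fun z => (G z).im) v z = (deriv G z * v).im := by
  have h := ((hG z).hasDerivAt.hasFDerivAt.restrictScalars ℝ)
  have h2 := (Complex.imCLM.hasFDerivAt.comp z h).fderiv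
  simp only [dd]
  rw [show (fun z => (G z).im) = Complex.imCLM ∘ G from rfl, h2]
  simp [mul_comm]

lemma contDiff_re {G : ℂ → ℂ} (hG : Differentiable ℂ G) : ContDiff ℝ 2 (fun z => (G z).re) :=
  Complex.reCLM.contDiff.comp ((hG.contDiff (n := 2)).restrict_scalars ℝ)

lemma contDiff_im {G : ℂ → ℂ} (hG : Differentiable ℂ G) : ContDiff ℝ 2 (fun z => (G z).im) :=
  Complex.imCLM.contDiff.comp ((hG.contDiff (n := 2)).restrict_scalars ℝ)

lemma lapHat_re {G : ℂ → ℂ} (hG : Differentiable ℂ G) (z : ℂ) :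
    lapHat (fun z => (G z).re) z = 0 := by
  have h : ∀ v, dd (fun z => (G z).re) v = fun z => (deriv G z * v).re :=
    fun v => funext fun z => dd_re hG v z
  have hd : Differentiable ℂ (deriv G) := hG.deriv
  simp only [lapHat_eq, h]
  rw [dd_re (G := fun z => deriv G z * 1) (by fun_prop),
    dd_re (G := fun z => deriv G z * Complex.I) (by fun_prop)]
  simp [deriv_mul_const (hd z)]

lemma lapHat_im {G : ℂ → ℂ} (hG : Differentiable ℂ G) (z : ℂ) :
    lapHat (fun z => (G z).im) z = 0 := by
  have h : ∀ v, dd (fun z => (G z).im) v = fun z => (deriv G z * v).im :=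
    fun v => funext fun z => dd_im hG v z
  have hd : Differentiable ℂ (deriv G) := hG.deriv
  simp only [lapHat_eq, h]
  rw [dd_im (G := fun z => deriv G z * 1) (by fun_prop),
    dd_im (G := fun z => deriv G z * Complex.I) (by fun_prop)]
  simp [deriv_mul_const (hd z)]

lemma lapHat_const (c : ℝ) (z : ℂ) : lapHat (fun _ => c) z = 0 := by
  simp [lapHat]

/-- log(|F|²+ε) -/
lemma lapHat_log_nonneg {F : ℂ → ℂ} (hF : Differentiable ℂ F) {ε : ℝ} (hε : 0 < ε) :
    ContDiff ℝ 2 (fun z => Real.log (‖F z‖ ^ 2 + ε)) ∧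
    ∀ z, 0 ≤ lapHat (fun z => Real.log (‖F z‖ ^ 2 + ε)) z := by
  have e : (fun z => Real.log (‖F z‖ ^ 2 + ε)) =
      fun z => Real.log ((((F z).re) ^ 2 + ((F z).im) ^ 2) + ε) := by
    funext z
    rw [← Complex.normSq_eq_norm_sq, Complex.normSq_apply]
    ring_nf
  rw [e]
  have hr := contDiff_re hF
  have hi := contDiff_im hF
  have hpos : ∀ z, 0 < (((F z).re) ^ 2 + ((F z).im) ^ 2) + ε := fun z => by positivity
  have c1 : ContDiff ℝ 2 (fun z => ((F z).re) ^ 2) := hr.pow 2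
  have c2 : ContDiff ℝ 2 (fun z => ((F z).im) ^ 2) := hi.pow 2
  have c3 : ContDiff ℝ 2 (fun z => ((F z).re) ^ 2 + ((F z).im) ^ 2) := c1.add c2
  have c4 : ContDiff ℝ 2 (fun z => (((F z).re) ^ 2 + ((F z).im) ^ 2) + ε) := c3.add contDiff_const
  refine ⟨c4.log fun z => (hpos z).ne', fun z => ?_⟩
  have hsq : ∀ x : ℝ, HasDerivAt (fun x : ℝ => x ^ 2) (2 * x) x := fun x => by
    simpa using hasDerivAt_pow 2 x
  have hsq2 : ∀ x : ℝ, HasDerivAt (fun x : ℝ => 2 * x) 2 x := fun x => by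
    simpa using (hasDerivAt_id x).const_mul (2 : ℝ)
  rw [lapHat_comp c4 (g := Real.log) (g' := fun x => x⁻¹) (g'' := fun x => -(x ^ 2)⁻¹)
    (fun z => Real.hasDerivAt_log (hpos z).ne') (fun z => hasDerivAt_inv (hpos z).ne')]
  rw [lapHat_add c3 contDiff_const, lapHat_add c1 c2, lapHat_const]
  rw [lapHat_comp hr (g := fun x => x ^ 2) (g' := fun x => 2 * x) (g'' := fun x => 2)
    (fun z => hsq _) (fun z => hsq2 _)]
  rw [lapHat_comp hi (g := fun x => x ^ 2) (g' := fun x => 2 * x) (g'' := fun x => 2)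
    (fun z => hsq _) (fun z => hsq2 _)]
  rw [lapHat_re hF, lapHat_im hF]
  have D : ∀ v, dd (fun z => (((F z).re) ^ 2 + ((F z).im) ^ 2) + ε) v z =
      2 * (F z).re * (deriv F z * v).re + 2 * (F z).im * (deriv F z * v).im := by
    intro v
    rw [dd_add (c3.differentiable (by norm_num)) (differentiable_const _),
      dd_add (c1.differentiable (by norm_num)) (c2.differentiable (by norm_num)),
      dd_comp (hr.differentiable (by norm_num)) (g := fun x => x ^ 2) (g' := fun x => 2 * x)
        (fun z => hsq _),
      dd_comp (hi.differentiable (by norm_num)) (g := fun x => x ^ 2) (g' := fun x => 2 * x)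
        (fun z => hsq _)]
    simp only [dd_re hF, dd_im hF]
    simp [dd]
  rw [D, D]
  simp only [dd_re hF, dd_im hF]
  have hp := hpos z
  simp only [mul_one, Complex.mul_re, Complex.mul_im, Complex.I_re, Complex.I_im]
  generalize (F z).re = a at *
  generalize (F z).im = b at *
  generalize (deriv F z).re = c at *
  generalize (deriv F z).im = d at *
  have : ε * (c ^ 2 + d ^ 2) / (a ^ 2 + b ^ 2 + ε) ^ 2 ≥ 0 := by positivity
  convert this using 1
  field_simp
  ring

lemma dd_hasCompactSupport {g : ℂ → ℝ} (hg : HasCompactSupport g) (v : ℂ) :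
    HasCompactSupport (dd g v) := hg.fderiv_apply (𝕜 := ℝ) v

lemma ibp {f g : ℂ → ℝ} (hf : ContDiff ℝ 1 f) (hg : ContDiff ℝ 1 g) (hc : HasCompactSupport g)
    (v : ℂ) : ∫ z, f z * dd g v z = - ∫ z, dd f v z * g z := by
  have c1 : Continuous (dd f v) := (contDiff_dd (n := 0) (by simpa using hf) v).continuous
  have c2 : Continuous (dd g v) := (contDiff_dd (n := 0) (by simpa using hg) v).continuous
  refine integral_mul_fderiv_eq_neg_fderiv_mul_of_integrable ?_ ?_ ?_ ?_ ?_
  · exact (c1.mul hg.continuous).integrable_of_hasCompactSupport hc.mul_left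
  · exact (hf.continuous.mul c2).integrable_of_hasCompactSupport (dd_hasCompactSupport hc v).mul_left
  · exact (hf.continuous.mul hg.continuous).integrable_of_hasCompactSupport hc.mul_left
  · exact fun x _ => hf.differentiable (by norm_num) x
  · exact fun x _ => hg.differentiable (by norm_num) x

lemma lapHat_continuous {u : ℂ → ℝ} (hu : ContDiff ℝ 2 u) : Continuous (lapHat u) :=
  (contDiff_lapHat (n := 0) (by simpa using hu)).continuous

lemma lapHat_hasCompactSupport {g : ℂ → ℝ} (hg : HasCompactSupport g) :
    HasCompactSupport (lapHat g) := by
  have h1 := dd_hasCompactSupport (dd_hasCompactSupport hg 1) 1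
  have h2 := dd_hasCompactSupport (dd_hasCompactSupport hg Complex.I) Complex.I
  have h3 := (h1.add h2).mul_right (f' := fun _ => (1 / 4 : ℝ))
  have e : lapHat g = (dd (dd g 1) 1 + dd (dd g Complex.I) Complex.I) * fun _ => (1 / 4 : ℝ) := by
    funext z
    simp [lapHat_eq]
    ring
  rw [e]
  exact h3

lemma ibp2 {f g : ℂ → ℝ} (hf : ContDiff ℝ 2 f) (hg : ContDiff ℝ 2 g) (hc : HasCompactSupport g)
    (v : ℂ) : ∫ z, f z * dd (dd g v) v z = ∫ z, dd (dd f v) v z * g z := by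
  rw [ibp (hf.of_le (by norm_num)) (contDiff_dd (n := 1) hg v) (dd_hasCompactSupport hc v)]
  rw [ibp (contDiff_dd (n := 1) hf v) (hg.of_le (by norm_num)) hc, neg_neg]

lemma ibp_lapHat {f g : ℂ → ℝ} (hf : ContDiff ℝ 2 f) (hg : ContDiff ℝ 2 g)
    (hc : HasCompactSupport g) : ∫ z, f z * lapHat g z = ∫ z, lapHat f z * g z := by
  have cc : ∀ {u : ℂ → ℝ}, ContDiff ℝ 2 u → ∀ v, Continuous (dd (dd u v) v) := fun hu v =>
    (contDiff_dd (n := 0) (contDiff_dd (n := 1) hu v) v).continuous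
  have i1 : ∀ v, Integrable (fun z => f z * dd (dd g v) v z) := fun v =>
    (hf.continuous.mul (cc hg v)).integrable_of_hasCompactSupport
      (dd_hasCompactSupport (dd_hasCompactSupport hc v) v).mul_left
  have i2 : ∀ v, Integrable (fun z => dd (dd f v) v z * g z) := fun v =>
    ((cc hf v).mul hg.continuous).integrable_of_hasCompactSupport hc.mul_left
  have e1 : (fun z => f z * lapHat g z) = fun z => (f z * dd (dd g 1) 1 z +
      f z * dd (dd g Complex.I) Complex.I z) / 4 := by
    funext z; rw [lapHat_eq]; ring
  have e2 : (fun z => lapHat f z * g z) = fun z => (dd (dd f 1) 1 z * g z +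
      dd (dd f Complex.I) Complex.I z * g z) / 4 := by
    funext z; rw [lapHat_eq]; ring
  rw [e1, e2, integral_div, integral_div, integral_add (i1 _) (i1 _), integral_add (i2 _) (i2 _),
    ibp2 hf hg hc, ibp2 hf hg hc]

lemma ibp_nonneg {f g : ℂ → ℝ} (hf : ContDiff ℝ 2 f) (h : ∀ z, 0 ≤ lapHat f z)
    (hg : ContDiff ℝ 2 g) (hc : HasCompactSupport g) (h0 : ∀ z, 0 ≤ g z) :
    0 ≤ ∫ z, f z * lapHat g z := by
  rw [ibp_lapHat hf hg hc]
  exact integral_nonneg fun z => mul_nonneg (h z) (h0 z)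

/-- locally, log|F| is integrable -/
lemma ae_ne_zero {F : ℂ → ℂ} (hF : Differentiable ℂ F) (hF0 : ∃ z, F z ≠ 0) :
    ∀ᵐ z : ℂ, F z ≠ 0 := by
  obtain ⟨x, hx⟩ := hF0
  have h := AnalyticOnNhd.preimage_zero_mem_codiscrete (f := F) (x := x)
    (fun z _ => hF.analyticAt z) hx
  have h2 := ae_restrict_le_codiscreteWithin (μ := (volume : Measure ℂ)) (U := Set.univ)
    MeasurableSet.univ h
  rw [Measure.restrict_univ] at h2
  exact h2

lemma locInt_log_norm (z₀ : ℂ) : IntegrableOn (fun z => Real.log ‖z - z₀‖) (Metric.ball z₀ 1) := by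
  have h0 : IntegrableOn (fun z : ℂ => Real.log ‖z‖) (Metric.ball 0 1) := by
    refine integrableOn_ball_of_norm_le_rpow (C := 1) (α := 1) ?_ ?_ ?_ ?_
    · simp
    · simp
    · filter_upwards [ae_restrict_mem measurableSet_ball] with x hx
      rw [Metric.mem_ball, dist_zero_right] at hx
      rcases eq_or_ne x 0 with rfl | h
      · simp
      have hp : 0 < ‖x‖ := norm_pos_iff.mpr h
      rw [Real.norm_eq_abs, abs_of_nonpos (Real.log_nonpos hp.le hx.le), ← Real.log_inv,
        Real.rpow_neg_one, one_mul]
      have := Real.log_le_sub_one_of_pos (inv_pos.mpr hp)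
      linarith
    · exact (Real.measurable_log.comp measurable_norm).aestronglyMeasurable
  have := (measurePreserving_sub_right (volume : Measure ℂ) z₀).integrableOn_comp_preimage
    (MeasurableEquiv.subRight z₀).measurableEmbedding (f := fun z : ℂ => Real.log ‖z‖)
    (s := Metric.ball 0 1)
  have h2 := this.mpr h0
  have e : (fun x => x - z₀) ⁻¹' Metric.ball 0 1 = Metric.ball z₀ 1 := by
    ext z
    simp [dist_eq_norm]
  rw [e] at h2
  exact h2

lemma locInt_log {F : ℂ → ℂ} (hF : Differentiable ℂ F) (hF0 : ∃ z, F z ≠ 0) :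
    LocallyIntegrable (fun z => Real.log (‖F z‖ ^ 2)) := by
  intro z₀
  have hz : ¬ ∀ᶠ z in 𝓝 z₀, F z = 0 := by
    intro h
    have h2 := (hF.analyticAt z₀).eventually_eq_zero_or_eventually_ne_zero
    obtain ⟨x, hx⟩ := hF0
    have := AnalyticOnNhd.eqOn_zero_of_preconnected_of_eventuallyEq_zero
      (f := F) (U := Set.univ) (fun z _ => hF.analyticAt z) isPreconnected_univ (Set.mem_univ z₀) h
    exact hx (this (Set.mem_univ x))
  obtain ⟨n, g, hg, hg0, hfg⟩ :=
    ((hF.analyticAt z₀).exists_eventuallyEq_pow_smul_nonzero_iff).mpr hz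
  have hgc : ∀ᶠ z in 𝓝 z₀, ContinuousAt g z ∧ g z ≠ 0 :=
    (hg.eventually_analyticAt.mono fun z h => h.continuousAt).and (hg.continuousAt.eventually_ne hg0)
  obtain ⟨r, hr, hball⟩ := Metric.eventually_nhds_iff_ball.mp (hgc.and hfg)
  set s := min (r / 2) (1 / 2) with hs
  have hs0 : 0 < s := by positivity
  have hsr : s < r := by have := min_le_left (r / 2) (1 / 2); linarith
  have hs1 : s < 1 := by have := min_le_right (r / 2) (1 / 2); linarith
  refine ⟨Metric.closedBall z₀ s, Metric.closedBall_mem_nhds _ hs0, ?_⟩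
  have i1 : IntegrableOn (fun z => 2 * n * Real.log ‖z - z₀‖) (Metric.closedBall z₀ s) :=
    ((locInt_log_norm z₀).mono_set (Metric.closedBall_subset_ball hs1)).const_mul _
  have i2 : IntegrableOn (fun z => 2 * Real.log ‖g z‖) (Metric.closedBall z₀ s) := by
    refine ContinuousOn.integrableOn_compact (isCompact_closedBall _ _) ?_
    intro z hz
    obtain ⟨⟨h1, h2⟩, _⟩ := hball z (Metric.closedBall_subset_ball hsr hz)
    exact ((h1.norm.log (norm_ne_zero_iff.mpr h2)).const_mul 2).continuousWithinAt
  refine (i1.add i2).congr ?_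
  have hne : ∀ᵐ z : ℂ, z ≠ z₀ := by
    simp [ae_iff]
  filter_upwards [ae_restrict_mem Metric.isClosed_closedBall.measurableSet,
    ae_restrict_of_ae hne] with z hz hzz
  obtain ⟨⟨h1, h2⟩, h3⟩ := hball z (Metric.closedBall_subset_ball hsr hz)
  have : ‖z - z₀‖ ≠ 0 := norm_ne_zero_iff.mpr (sub_ne_zero.mpr hzz)
  simp only [Pi.add_apply]
  rw [h3, norm_smul, norm_pow, Real.log_pow, Real.log_mul (by positivity)
    (norm_ne_zero_iff.mpr h2), Real.log_pow]
  push_cast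
  ring

lemma distrib_part {F : ℂ → ℂ} (hF : Differentiable ℂ F) (hF0 : ∃ z, F z ≠ 0) {h : ℂ → ℝ}
    (hh : ContDiff ℝ 2 h) (hl : ∀ z, 0 ≤ lapHat h z) {w : ℂ → ℝ}
    (hw : ∀ z, F z ≠ 0 → w z = Real.log (‖F z‖ ^ 2) + h z) : SubharmonicDistrib w := by
  have hae : (fun z => Real.log (‖F z‖ ^ 2) + h z) =ᵐ[volume] w := by
    filter_upwards [ae_ne_zero hF hF0] with z hz
    rw [hw z hz]
  have hli : LocallyIntegrable (fun z => Real.log (‖F z‖ ^ 2) + h z) :=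
    (locInt_log hF hF0).add hh.continuous.locallyIntegrable
  refine ⟨?_, ?_⟩
  · intro z
    obtain ⟨U, hU, hi⟩ := hli z
    exact ⟨U, hU, hi.congr (ae_restrict_of_ae hae)⟩
  intro ψ hψ hc h0
  have hψ2 : ContDiff ℝ 2 ψ := contDiff_infty.mp hψ 2
  have hLc := lapHat_continuous hψ2
  have hLs := lapHat_hasCompactSupport hc
  have hint : ∀ {f : ℂ → ℝ}, LocallyIntegrable f → Integrable (fun z => f z * lapHat ψ z) := by
    intro f hf
    have := hf.integrable_smul_right_of_hasCompactSupport hLc hLs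
    simpa using this
  let ε : ℕ → ℝ := fun n => 1 / ((n : ℝ) + 1)
  have hε : ∀ n, 0 < ε n := fun n => Nat.one_div_pos_of_nat
  have hε1 : ∀ n, ε n ≤ 1 := fun n => by
    simp only [ε]; rw [div_le_one (by positivity)]; linarith [n.cast_nonneg (α := ℝ)]
  have hεt : Tendsto ε atTop (𝓝 0) := tendsto_one_div_add_atTop_nhds_zero_nat
  have key : ∀ n, 0 ≤ ∫ z, (Real.log (‖F z‖ ^ 2 + ε n) + h z) * lapHat ψ z := by
    intro n
    obtain ⟨a, b⟩ := lapHat_log_nonneg hF (hε n)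
    refine ibp_nonneg (a.add hh) (fun z => ?_) hψ2 hc h0
    rw [lapHat_add a hh]
    exact add_nonneg (b z) (hl z)
  obtain ⟨a1, _⟩ := lapHat_log_nonneg hF one_pos
  have hlim : Tendsto (fun n => ∫ z, (Real.log (‖F z‖ ^ 2 + ε n) + h z) * lapHat ψ z) atTop
      (𝓝 (∫ z, w z * lapHat ψ z)) := by
    refine tendsto_integral_of_dominated_convergence
      (fun z => ‖Real.log (‖F z‖ ^ 2) * lapHat ψ z‖ + ‖Real.log (‖F z‖ ^ 2 + 1) * lapHat ψ z‖
        + ‖h z * lapHat ψ z‖) ?_ ?_ ?_ ?_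
    · intro n
      exact (((lapHat_log_nonneg hF (hε n)).1.continuous.add hh.continuous).mul
        hLc).aestronglyMeasurable
    · exact ((hint (locInt_log hF hF0)).norm.add (hint a1.continuous.locallyIntegrable).norm).add
        (hint hh.continuous.locallyIntegrable).norm
    · intro n
      filter_upwards [ae_ne_zero hF hF0] with z hz
      have hp : 0 < ‖F z‖ ^ 2 := by positivity
      have l1 : Real.log (‖F z‖ ^ 2) ≤ Real.log (‖F z‖ ^ 2 + ε n) :=
        Real.log_le_log hp (by linarith [hε n])
      have l2 : Real.log (‖F z‖ ^ 2 + ε n) ≤ Real.log (‖F z‖ ^ 2 + 1) :=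
        Real.log_le_log (by linarith [hε n]) (by linarith [hε1 n])
      have l3 : |Real.log (‖F z‖ ^ 2 + ε n)| ≤
          |Real.log (‖F z‖ ^ 2)| + |Real.log (‖F z‖ ^ 2 + 1)| := by
        rw [abs_le]
        constructor
        · linarith [neg_abs_le (Real.log (‖F z‖ ^ 2)), abs_nonneg (Real.log (‖F z‖ ^ 2 + 1))]
        · linarith [le_abs_self (Real.log (‖F z‖ ^ 2 + 1)), abs_nonneg (Real.log (‖F z‖ ^ 2))]
      simp only [Real.norm_eq_abs, abs_mul, ← add_mul]
      refine mul_le_mul_of_nonneg_right ?_ (abs_nonneg _)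
      exact (abs_add_le _ _).trans (by linarith)
    · filter_upwards [ae_ne_zero hF hF0] with z hz
      have hp : ‖F z‖ ^ 2 ≠ 0 := by positivity
      rw [hw z hz]
      refine Tendsto.mul_const _ (Tendsto.add_const _ ?_)
      refine (Real.continuousAt_log hp).tendsto.comp ?_
      simpa using hεt.const_add (‖F z‖ ^ 2)
  exact ge_of_tendsto' hlim key

lemma nsq_smooth : ContDiff ℝ 1 (fun z : ℂ => 1 - (z.re ^ 2 + z.im ^ 2)) :=
  contDiff_const.sub ((Complex.reCLM.contDiff.pow 2).add (Complex.imCLM.contDiff.pow 2))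

lemma nsq_out {z : ℂ} (hz : z ∉ Metric.closedBall (0 : ℂ) 1) : 1 - (z.re ^ 2 + z.im ^ 2) ≤ 0 := by
  have h1 : 1 < ‖z‖ := by simpa using hz
  have h2 : ‖z‖ ^ 2 = z.re ^ 2 + z.im ^ 2 := by
    rw [← Complex.normSq_eq_norm_sq, Complex.normSq_apply]; ring
  nlinarith

lemma dd_nsq (v z : ℂ) : dd (fun z : ℂ => 1 - (z.re ^ 2 + z.im ^ 2)) v z =
    -2 * (z.re * v.re + z.im * v.im) := by
  have h1 := (Complex.reCLM.hasFDerivAt (x := z)).pow 2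
  have h2 := (Complex.imCLM.hasFDerivAt (x := z)).pow 2
  have h := ((h1.add h2).const_sub 1).fderiv
  simp only [dd]
  change fderiv ℝ (fun z : ℂ => 1 - (Complex.reCLM z ^ 2 + Complex.imCLM z ^ 2)) z v = _
  erw [h]
  simp
  ring

lemma dd_shift {f : ℂ → ℝ} (hf : Differentiable ℝ f) (z₀ : ℂ) (t : ℝ) (v ζ : ℂ) :
    dd (fun ζ => f (z₀ + t * ζ)) v ζ = t * dd f v (z₀ + t * ζ) := by
  have h1 : HasFDerivAt (fun ζ : ℂ => z₀ + (t : ℂ) * ζ) (t • ContinuousLinearMap.id ℝ ℂ) ζ := by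
    have := ((hasFDerivAt_id (𝕜 := ℝ) ζ).const_smul t).const_add z₀
    simpa using this
  have h := ((hf (z₀ + t * ζ)).hasFDerivAt.comp ζ h1).fderiv
  simp only [dd]
  change fderiv ℝ (f ∘ fun ζ : ℂ => z₀ + (t : ℂ) * ζ) ζ v = _
  rw [h]
  simp

lemma smv_aux {w : ℂ → ℝ} (hw : ContDiff ℝ 2 w) (hl : ∀ z, 0 ≤ lapHat w z) (k K : ℝ → ℝ)
    (hk : Continuous k) (hk0 : ∀ t ≤ 0, k t = 0) (hK : ∀ t, HasDerivAt K (k t) t)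
    (hK0 : ∀ t ≤ 0, K t = 0) (hKn : ∀ t, 0 ≤ K t) (z₀ : ℂ) (r : ℝ) (hr : 0 < r) :
    ∫ ζ : ℂ, k (1 - (ζ.re ^ 2 + ζ.im ^ 2)) * w z₀ ≤
      ∫ ζ : ℂ, k (1 - (ζ.re ^ 2 + ζ.im ^ 2)) * w (z₀ + r * ζ) := by
  have hwd := hw.differentiable (by norm_num)
  have hfc : Continuous (fderiv ℝ w) := hw.continuous_fderiv (by norm_num)
  set κ : ℂ → ℝ := fun ζ => k (1 - (ζ.re ^ 2 + ζ.im ^ 2)) with hκ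
  set P : ℂ → ℝ := fun ζ => K (1 - (ζ.re ^ 2 + ζ.im ^ 2)) with hP
  have κc : Continuous κ := hk.comp nsq_smooth.continuous
  have κs : HasCompactSupport κ := HasCompactSupport.intro (isCompact_closedBall 0 1)
    fun z hz => hk0 _ (nsq_out hz)
  have hK1 : ContDiff ℝ 1 K := by
    rw [contDiff_one_iff_deriv]
    refine ⟨fun t => (hK t).differentiableAt, ?_⟩
    rw [show deriv K = k from funext fun t => (hK t).deriv]
    exact hk
  have P1 : ContDiff ℝ 1 P := hK1.comp nsq_smooth
  have Ps : HasCompactSupport P := HasCompactSupport.intro (isCompact_closedBall 0 1)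
    fun z hz => hK0 _ (nsq_out hz)
  have dP : ∀ v ζ, dd P v ζ = κ ζ * (-2 * (ζ.re * v.re + ζ.im * v.im)) := by
    intro v ζ
    rw [hP, dd_comp (nsq_smooth.differentiable (by norm_num)) (g := K) (g' := k) (fun z => hK _)]
    simp only [dd_nsq, hκ]
  let G : ℝ → ℝ := fun t => ∫ ζ : ℂ, κ ζ * w (z₀ + t * ζ)
  have hG : ∀ t : ℝ, HasDerivAt G (∫ ζ : ℂ, κ ζ * fderiv ℝ w (z₀ + t * ζ) ζ) t := by
    intro t
    have hcont : Continuous (fun p : ℝ × ℂ => κ p.2 * fderiv ℝ w (z₀ + p.1 * p.2) p.2) := by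
      refine (κc.comp continuous_snd).mul ?_
      refine (hfc.comp ?_).clm_apply continuous_snd
      fun_prop
    obtain ⟨C, hC⟩ := ((isCompact_closedBall t 1).prod
      (isCompact_closedBall (0 : ℂ) 1)).exists_bound_of_continuousOn hcont.continuousOn
    refine (hasDerivAt_integral_of_dominated_loc_of_deriv_le (s := Metric.closedBall t 1)
      (bound := (Metric.closedBall (0 : ℂ) 1).indicator fun _ => C)
      (F := fun t ζ => κ ζ * w (z₀ + (t : ℝ) * ζ))
      (F' := fun t ζ => κ ζ * fderiv ℝ w (z₀ + (t : ℝ) * ζ) ζ)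
      (Metric.closedBall_mem_nhds _ one_pos) ?_ ?_ ?_ ?_ ?_ ?_).2
    · refine Eventually.of_forall fun s => Continuous.aestronglyMeasurable ?_
      exact κc.mul (hw.continuous.comp (by fun_prop))
    · refine Continuous.integrable_of_hasCompactSupport ?_ κs.mul_right
      exact κc.mul (hw.continuous.comp (by fun_prop))
    · refine Continuous.aestronglyMeasurable ?_
      exact hcont.comp (by fun_prop : Continuous fun ζ : ℂ => (t, ζ))
    · refine Eventually.of_forall fun ζ s hs => ?_
      by_cases hζ : ζ ∈ Metric.closedBall (0 : ℂ) 1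
      · rw [Set.indicator_of_mem hζ]
        exact hC (s, ζ) ⟨hs, hζ⟩
      · rw [Set.indicator_of_notMem hζ]
        have : κ ζ = 0 := hk0 _ (nsq_out hζ)
        simp [this]
    · rw [integrable_indicator_iff Metric.isClosed_closedBall.measurableSet]
      exact continuous_const.continuousOn.integrableOn_compact (isCompact_closedBall _ _)
    · refine Eventually.of_forall fun ζ s _ => ?_
      refine HasDerivAt.const_mul _ ?_
      have h1 : HasDerivAt (fun s : ℝ => z₀ + (s : ℂ) * ζ) ζ s := by
        have := ((hasDerivAt_id s).ofReal_comp.mul_const ζ).const_add z₀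
        simpa using this
      exact (hwd _).hasFDerivAt.comp_hasDerivAt s h1
  have hG' : ∀ t : ℝ, 0 ≤ t → 0 ≤ ∫ ζ : ℂ, κ ζ * fderiv ℝ w (z₀ + t * ζ) ζ := by
    intro t ht
    have hf1 : ∀ v, ContDiff ℝ 1 (dd w v) := fun v => contDiff_dd (n := 1) hw v
    have hsm : ContDiff ℝ 1 (fun ζ : ℂ => z₀ + (t : ℂ) * ζ) :=
      contDiff_const.add (contDiff_const.mul contDiff_id)
    have hf : ∀ v, ContDiff ℝ 1 (fun ζ => dd w v (z₀ + t * ζ)) := fun v => (hf1 v).comp hsm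
    have B : ∀ v, ∫ ζ, dd w v (z₀ + t * ζ) * dd P v ζ =
        - ∫ ζ, t * dd (dd w v) v (z₀ + t * ζ) * P ζ := by
      intro v
      rw [ibp (hf v) P1 Ps v]
      simp only [dd_shift ((hf1 v).differentiable (by norm_num))]
    have e : ∀ ζ, κ ζ * fderiv ℝ w (z₀ + t * ζ) ζ = (-1 / 2) *
        (dd w 1 (z₀ + t * ζ) * dd P 1 ζ + dd w Complex.I (z₀ + t * ζ) * dd P Complex.I ζ) := by
      intro ζ
      have : fderiv ℝ w (z₀ + t * ζ) ζ =
          ζ.re * dd w 1 (z₀ + t * ζ) + ζ.im * dd w Complex.I (z₀ + t * ζ) := by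
        have e0 : ζ = ζ.re • (1 : ℂ) + ζ.im • Complex.I := by
          simp [Complex.re_add_im]
        conv_lhs => rw [show fderiv ℝ w (z₀ + t * ζ) ζ =
          fderiv ℝ w (z₀ + t * ζ) (ζ.re • (1 : ℂ) + ζ.im • Complex.I) from by rw [← e0]]
        rw [map_add, map_smul, map_smul]
        rfl
      rw [this, dP, dP]
      simp
      ring
    have iI : ∀ v, Integrable (fun ζ => dd w v (z₀ + t * ζ) * dd P v ζ) := fun v =>
      ((hf v).continuous.mul (contDiff_dd (n := 0) (by simpa using P1)
        v).continuous).integrable_of_hasCompactSupport (dd_hasCompactSupport Ps v).mul_left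
    have cc : ∀ v, Continuous (dd (dd w v) v) := fun v =>
      (contDiff_dd (n := 0) (contDiff_dd (n := 1) hw v) v).continuous
    have iJ : ∀ v, Integrable (fun ζ => t * dd (dd w v) v (z₀ + t * ζ) * P ζ) := fun v =>
      ((continuous_const.mul ((cc v).comp hsm.continuous)).mul
        P1.continuous).integrable_of_hasCompactSupport Ps.mul_left
    simp only [e]
    rw [integral_const_mul, integral_add (iI _) (iI _), B, B, ← neg_add, ← integral_add (iJ _) (iJ _)]
    have : 0 ≤ ∫ ζ, (t * dd (dd w 1) 1 (z₀ + t * ζ) * P ζ +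
        t * dd (dd w Complex.I) Complex.I (z₀ + t * ζ) * P ζ) := by
      refine integral_nonneg fun ζ => ?_
      have h1 := hl (z₀ + t * ζ)
      rw [lapHat_eq] at h1
      have h2 : 0 ≤ P ζ := hKn _
      have h3 : 0 ≤ t * (dd (dd w 1) 1 (z₀ + t * ζ) +
        dd (dd w Complex.I) Complex.I (z₀ + t * ζ)) * P ζ :=
        mul_nonneg (mul_nonneg ht (by linarith)) h2
      simp only [Pi.zero_apply]
      linarith
    linarith
  have hm : MonotoneOn G (Set.Ici 0) := by
    refine monotoneOn_of_deriv_nonneg (convex_Ici 0)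
      (fun t _ => (hG t).continuousAt.continuousWithinAt)
      (fun t _ => (hG t).differentiableAt.differentiableWithinAt) fun t ht => ?_
    rw [interior_Ici] at ht
    rw [(hG t).deriv]
    exact hG' t (le_of_lt ht)
  have := hm (Set.mem_Ici.mpr le_rfl) (Set.mem_Ici.mpr hr.le) hr.le
  simpa [G] using this

lemma in_ball_iff (ζ : ℂ) : 0 < 1 - (ζ.re ^ 2 + ζ.im ^ 2) ↔ ζ ∈ Metric.ball (0 : ℂ) 1 := by
  have h2 : ‖ζ‖ ^ 2 = ζ.re ^ 2 + ζ.im ^ 2 := by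
    rw [← Complex.normSq_eq_norm_sq, Complex.normSq_apply]; ring
  rw [← h2, mem_ball_zero_iff, sub_pos, sq_lt_one_iff₀ (norm_nonneg _)]

lemma smv_ball {w : ℂ → ℝ} (hw : ContDiff ℝ 2 w) (hl : ∀ z, 0 ≤ lapHat w z)
    (z₀ : ℂ) (r : ℝ) (hr : 0 < r) :
    ∫ _ζ in Metric.ball (0 : ℂ) 1, w z₀ ≤ ∫ ζ in Metric.ball (0 : ℂ) 1, w (z₀ + r * ζ) := by
  let k : ℕ → ℝ → ℝ := fun n t => min 1 (max 0 ((n : ℝ) * t))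
  have kc : ∀ n, Continuous (k n) := fun n => by fun_prop
  have kn : ∀ n t, 0 ≤ k n t := fun n t => le_min zero_le_one (le_max_left _ _)
  have k1 : ∀ n t, k n t ≤ 1 := fun n t => min_le_left _ _
  have k0 : ∀ n, ∀ t ≤ 0, k n t = 0 := by
    intro n t ht
    have : (n : ℝ) * t ≤ 0 := mul_nonpos_of_nonneg_of_nonpos n.cast_nonneg ht
    simp [k, max_eq_left this]
  have key : ∀ n, ∫ ζ : ℂ, k n (1 - (ζ.re ^ 2 + ζ.im ^ 2)) * w z₀ ≤
      ∫ ζ : ℂ, k n (1 - (ζ.re ^ 2 + ζ.im ^ 2)) * w (z₀ + r * ζ) := by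
    intro n
    refine smv_aux hw hl (k n) (fun t => ∫ x in (0 : ℝ)..t, k n x) (kc n) (k0 n) ?_ ?_ ?_ z₀ r hr
    · intro t
      exact intervalIntegral.integral_hasDerivAt_right ((kc n).intervalIntegrable _ _)
        ((kc n).stronglyMeasurableAtFilter _ _) (kc n).continuousAt
    · intro t ht
      rw [intervalIntegral.integral_congr (g := fun _ => 0)]
      · simp
      · intro x hx
        rw [Set.uIcc_of_ge ht] at hx
        exact k0 n x hx.2
    · intro t
      rcases le_total 0 t with h | h
      · exact intervalIntegral.integral_nonneg h fun x _ => kn n x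
      · refine le_of_eq ?_
        rw [intervalIntegral.integral_congr (g := fun _ => 0)]
        · simp
        · intro x hx
          rw [Set.uIcc_of_ge h] at hx
          exact k0 n x hx.2
  have lim : ∀ f : ℂ → ℝ, Continuous f → Tendsto
      (fun n => ∫ ζ : ℂ, k n (1 - (ζ.re ^ 2 + ζ.im ^ 2)) * f ζ) atTop
      (𝓝 (∫ ζ in Metric.ball (0 : ℂ) 1, f ζ)) := by
    intro f hf
    rw [← integral_indicator measurableSet_ball]
    refine tendsto_integral_of_dominated_convergence
      ((Metric.closedBall (0 : ℂ) 1).indicator fun ζ => ‖f ζ‖) ?_ ?_ ?_ ?_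
    · intro n
      exact (((kc n).comp nsq_smooth.continuous).mul hf).aestronglyMeasurable
    · rw [integrable_indicator_iff Metric.isClosed_closedBall.measurableSet]
      exact hf.norm.continuousOn.integrableOn_compact (isCompact_closedBall _ _)
    · intro n
      refine Eventually.of_forall fun ζ => ?_
      by_cases hζ : ζ ∈ Metric.closedBall (0 : ℂ) 1
      · rw [Set.indicator_of_mem hζ, norm_mul, Real.norm_of_nonneg (kn n _)]
        exact mul_le_of_le_one_left (norm_nonneg _) (k1 n _)
      · rw [Set.indicator_of_notMem hζ, k0 n _ (nsq_out hζ)]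
        simp
    · refine Eventually.of_forall fun ζ => ?_
      by_cases hζ : ζ ∈ Metric.ball (0 : ℂ) 1
      · rw [Set.indicator_of_mem hζ]
        have hp := (in_ball_iff ζ).mpr hζ
        obtain ⟨N, hN⟩ := exists_nat_gt (1 / (1 - (ζ.re ^ 2 + ζ.im ^ 2)))
        refine tendsto_const_nhds.congr' ?_
        filter_upwards [eventually_ge_atTop N] with n hn
        have h1 : (1 : ℝ) ≤ n * (1 - (ζ.re ^ 2 + ζ.im ^ 2)) := by
          rw [← div_le_iff₀ hp]
          exact hN.le.trans (by exact_mod_cast hn)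
        have : k n (1 - (ζ.re ^ 2 + ζ.im ^ 2)) = 1 :=
          min_eq_left (h1.trans (le_max_right _ _))
        rw [this, one_mul]
      · rw [Set.indicator_of_notMem hζ]
        have hp : 1 - (ζ.re ^ 2 + ζ.im ^ 2) ≤ 0 := not_lt.mp fun h => hζ ((in_ball_iff ζ).mp h)
        simp only [k0 _ _ hp, zero_mul]
        exact tendsto_const_nhds
  exact le_of_tendsto_of_tendsto' (lim _ continuous_const)
    (lim _ (hw.continuous.comp (by fun_prop))) key

lemma ball_scale (f : ℂ → ℝ) (z₀ : ℂ) (r : ℝ) (hr : 0 < r) :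
    ∫ ζ in Metric.ball (0 : ℂ) 1, f (z₀ + r * ζ) = (r ^ 2)⁻¹ * ∫ z in Metric.ball z₀ r, f z := by
  rw [← integral_indicator measurableSet_ball, ← integral_indicator measurableSet_ball]
  set g := (Metric.ball z₀ r).indicator f
  have e : (Metric.ball (0 : ℂ) 1).indicator (fun ζ => f (z₀ + r * ζ)) =
      fun ζ => g (z₀ + r • ζ) := by
    funext ζ
    have : ζ ∈ Metric.ball (0 : ℂ) 1 ↔ z₀ + r • ζ ∈ Metric.ball z₀ r := by
      simp [abs_of_pos hr, hr]
    by_cases h : ζ ∈ Metric.ball (0 : ℂ) 1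
    · rw [Set.indicator_of_mem h]
      simp only [g]
      rw [Set.indicator_of_mem (this.mp h)]
      simp
    · rw [Set.indicator_of_notMem h]
      simp only [g]
      rw [Set.indicator_of_notMem (fun h' => h (this.mpr h'))]
  rw [e, Measure.integral_comp_smul (volume : Measure ℂ) (fun x => g (z₀ + x)) r,
    integral_add_left_eq_self]
  simp

lemma smv_C2 {w : ℂ → ℝ} (hw : ContDiff ℝ 2 w) (hl : ∀ z, 0 ≤ lapHat w z)
    (z₀ : ℂ) (r : ℝ) (hr : 0 < r) :
    w z₀ ≤ (1 / (Real.pi * r ^ 2)) * ∫ z in Metric.ball z₀ r, w z := by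
  have h := smv_ball hw hl z₀ r hr
  rw [ball_scale w z₀ r hr] at h
  have hv : (volume : Measure ℂ).real (Metric.ball 0 1) = Real.pi := by
    simp [Measure.real, Complex.volume_ball]
  rw [setIntegral_const, hv, smul_eq_mul] at h
  rw [one_div, mul_inv, mul_assoc]
  rw [le_inv_mul_iff₀ Real.pi_pos]
  exact h

lemma smv_part {F : ℂ → ℂ} (hF : Differentiable ℂ F) {h : ℂ → ℝ}
    (hh : ContDiff ℝ 2 h) (hl : ∀ z, 0 ≤ lapHat h z) :
    SubharmonicSMV (fun z => ‖F z‖ ^ 2 * Real.exp (h z)) := by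
  have cF : Continuous (fun z => ‖F z‖ ^ 2 * Real.exp (h z)) :=
    (hF.continuous.norm.pow 2).mul (Real.continuous_exp.comp hh.continuous)
  have ce : Continuous (fun z => Real.exp (h z)) := Real.continuous_exp.comp hh.continuous
  refine ⟨cF.upperSemicontinuous, fun z₀ r hr => ?_⟩
  have ib : ∀ {f : ℂ → ℝ}, Continuous f → IntegrableOn f (Metric.ball z₀ r) := fun hf =>
    (hf.continuousOn.integrableOn_compact (isCompact_closedBall z₀ r)).mono_set
      Metric.ball_subset_closedBall
  have key : ∀ ε : ℝ, 0 < ε → ‖F z₀‖ ^ 2 * Real.exp (h z₀) + ε * Real.exp (h z₀) ≤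
      (1 / (Real.pi * r ^ 2)) * ((∫ z in Metric.ball z₀ r, ‖F z‖ ^ 2 * Real.exp (h z)) +
        ε * ∫ z in Metric.ball z₀ r, Real.exp (h z)) := by
    intro ε hε
    obtain ⟨a, b⟩ := lapHat_log_nonneg hF hε
    have hu : ContDiff ℝ 2 (fun z => Real.log (‖F z‖ ^ 2 + ε) + h z) := a.add hh
    have hlu : ∀ z, 0 ≤ lapHat (fun z => Real.log (‖F z‖ ^ 2 + ε) + h z) z := fun z => by
      rw [lapHat_add a hh]
      exact add_nonneg (b z) (hl z)
    have := smv_C2 (Real.contDiff_exp.comp hu) (lapHat_exp_nonneg hu hlu) z₀ r hr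
    have e : ∀ z, Real.exp (Real.log (‖F z‖ ^ 2 + ε) + h z) =
        ‖F z‖ ^ 2 * Real.exp (h z) + ε * Real.exp (h z) := fun z => by
      rw [Real.exp_add, Real.exp_log (by positivity)]
      ring
    simp only [Function.comp_def, e] at this
    rwa [integral_add (ib cF) ((ib ce).const_mul ε), integral_const_mul] at this
  have t : ∀ a b : ℝ, Tendsto (fun ε : ℝ => a + ε * b) (𝓝[>] 0) (𝓝 a) := fun a b => by
    have : Continuous (fun ε : ℝ => a + ε * b) := by fun_prop
    have h2 := this.tendsto 0
    simp only [zero_mul, add_zero] at h2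
    exact h2.mono_left nhdsWithin_le_nhds
  refine le_of_tendsto_of_tendsto (t _ (Real.exp (h z₀)))
    ((t _ (∫ z in Metric.ball z₀ r, Real.exp (h z))).const_mul _) ?_
  filter_upwards [self_mem_nhdsWithin] with ε hε
  exact key ε hε


theorem stmt4 (φ : ℂ → ℝ) (hφ : ContDiff ℝ 4 φ) (hpos : ∀ z, 0 < lapHat φ z)
    (hcurv : ∀ z, -2 ≤ (lapHat φ z)⁻¹ * lapHat (fun w => Real.log (lapHat φ w)) z)
    (F : ℂ → ℂ) (hF : Differentiable ℂ F) (hF0 : ∃ z, F z ≠ 0) :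
    SubharmonicDistrib (fun z => Real.log (‖F z‖ ^ 2 * Real.exp (2 * φ z) * lapHat φ z)) ∧
      SubharmonicSMV (fun z => ‖F z‖ ^ 2 * Real.exp (2 * φ z) * lapHat φ z) := by
  have hLap : ContDiff ℝ 2 (lapHat φ) := contDiff_lapHat (n := 2) (by simpa using hφ)
  have hlog : ContDiff ℝ 2 (fun w => Real.log (lapHat φ w)) := hLap.log fun z => (hpos z).ne'
  have hφ2 : ContDiff ℝ 2 φ := hφ.of_le (by norm_num)
  have h2φ : ContDiff ℝ 2 (fun z => 2 * φ z) := contDiff_const.mul hφ2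
  have hh : ContDiff ℝ 2 (fun z => 2 * φ z + Real.log (lapHat φ z)) := h2φ.add hlog
  have hl : ∀ z, 0 ≤ lapHat (fun z => 2 * φ z + Real.log (lapHat φ z)) z := by
    intro z
    rw [lapHat_add h2φ hlog, lapHat_const_mul hφ2]
    have h1 := hcurv z
    rw [inv_mul_eq_div, le_div_iff₀ (hpos z)] at h1
    linarith
  constructor
  · refine distrib_part hF hF0 hh hl fun z hz => ?_
    have hp : ‖F z‖ ^ 2 ≠ 0 := by positivity
    rw [Real.log_mul (mul_ne_zero hp (Real.exp_pos _).ne') (hpos z).ne',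
      Real.log_mul hp (Real.exp_pos _).ne', Real.log_exp]
    ring
  · have := smv_part hF hh hl
    have e : (fun z => ‖F z‖ ^ 2 * Real.exp (2 * φ z) * lapHat φ z) =
        fun z => ‖F z‖ ^ 2 * Real.exp (2 * φ z + Real.log (lapHat φ z)) := by
      funext z
      rw [Real.exp_add, Real.exp_log (hpos z)]
      ring
    rw [e]
    exact this
end

section
/- Suppose f ∈ L²(ℂ, e^{|z|²} dA) and u : ℂ → ℂ is a locally integrable function solving ∂̄u = f in the sense of distributions, with ∫_ℂ |u(z)|² e^{ε|z|²} dA(z) < ∞ for some ε > 0. Then ∫_ℂ z^j f(z) dA(z) = 0 for every integer j ≥ 0. -/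
open MeasureTheory Complex Real Filter Topology

/-- Polynomial times gaussian is integrable. -/
lemma gauss_int (ε : ℝ) (hε : 0 < ε) (j : ℕ) :
    Integrable (fun z : ℂ => ‖z‖ ^ (2 * j) * Real.exp (-(ε * ‖z‖ ^ 2))) volume := by
  have h := Complex.integral_rpow_mul_exp_neg_mul_rpow (p := 2) (q := (2 * j : ℕ)) (b := ε)
    (by norm_num) (by have : (0:ℝ) ≤ ((2 * j : ℕ) : ℝ) := Nat.cast_nonneg _
                      linarith) hε
  by_contra hcon
  have h0 : ∫ z : ℂ, ‖z‖ ^ (((2 * j : ℕ)) : ℝ) * Real.exp (-ε * ‖z‖ ^ (2:ℝ)) = 0 := by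
    apply integral_undef
    intro hi
    apply hcon
    refine hi.congr (Eventually.of_forall fun z => ?_)
    simp only [Real.rpow_natCast, Real.rpow_two, neg_mul]
  rw [h0] at h
  have hj : (0:ℝ) ≤ ((2 * j : ℕ) : ℝ) := Nat.cast_nonneg _
  have h1 : 0 < Real.Gamma ((((2 * j : ℕ) : ℝ) + 2) / 2) := Real.Gamma_pos_of_pos (by positivity)
  have h2 : 0 < ε ^ (-(((2 * j : ℕ) : ℝ) + 2) / 2) := Real.rpow_pos_of_pos hε _
  have h3 := Real.pi_pos
  have : 0 < (2 * π / 2) * ε ^ (-(((2 * j : ℕ) : ℝ) + 2) / 2)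
    * Real.Gamma ((((2 * j : ℕ) : ℝ) + 2) / 2) := by positivity
  linarith

/-- Moments converge absolutely. -/
lemma moment_int (f : ℂ → ℂ) (hm : AEStronglyMeasurable f volume) (ε : ℝ) (hε : 0 < ε)
    (hf : Integrable (fun z => ‖f z‖ ^ 2 * Real.exp (ε * ‖z‖ ^ 2)) volume) (j : ℕ) :
    Integrable (fun z : ℂ => z ^ j * f z) volume := by
  have hc : Continuous fun z : ℂ => z ^ j := by fun_prop
  refine (hf.add (gauss_int ε hε j)).mono' (hc.aestronglyMeasurable.mul hm)
    (Eventually.of_forall fun z => ?_)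
  simp only [Pi.add_apply, norm_mul, norm_pow]
  have he : Real.exp (ε * ‖z‖ ^ 2 / 2) * Real.exp (-(ε * ‖z‖ ^ 2) / 2) = 1 := by
    rw [← Real.exp_add, ← Real.exp_zero]; congr 1; ring
  have h1 : Real.exp (ε * ‖z‖ ^ 2) = Real.exp (ε * ‖z‖ ^ 2 / 2) ^ 2 := by
    rw [← Real.exp_nat_mul]; congr 1; push_cast; ring
  have h2 : Real.exp (-(ε * ‖z‖ ^ 2)) = Real.exp (-(ε * ‖z‖ ^ 2) / 2) ^ 2 := by
    rw [← Real.exp_nat_mul]; congr 1; push_cast; ring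
  rw [h1, h2]
  set A := Real.exp (ε * ‖z‖ ^ 2 / 2)
  set B := Real.exp (-(ε * ‖z‖ ^ 2) / 2)
  have h3 : ‖z‖ ^ j * ‖f z‖ = (‖f z‖ * A) * (‖z‖ ^ j * B) := by
    calc ‖z‖ ^ j * ‖f z‖ = ‖z‖ ^ j * ‖f z‖ * (A * B) := by rw [he, mul_one]
      _ = _ := by ring
  rw [h3, show ‖f z‖ ^ 2 * A ^ 2 + ‖z‖ ^ (2 * j) * B ^ 2
    = (‖f z‖ * A) ^ 2 + (‖z‖ ^ j * B) ^ 2 by ring]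
  nlinarith [sq_nonneg (‖f z‖ * A - ‖z‖ ^ j * B), sq_nonneg (‖f z‖ * A), sq_nonneg (‖z‖ ^ j * B)]

lemma dbar_mul_pow (g : ℂ → ℂ) (hg : Differentiable ℝ g) (j : ℕ) (z : ℂ) :
    dbar (fun w => w ^ j * g w) z = z ^ j * dbar g z := by
  have hp : HasFDerivAt (fun w : ℂ => w ^ j)
      (((ContinuousLinearMap.toSpanSingleton ℂ ((j : ℂ) * z ^ (j - 1))).restrictScalars ℝ)) z :=
    (hasDerivAt_pow j z).hasFDerivAt.restrictScalars ℝ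
  have h := (hp.mul (hg z).hasFDerivAt).fderiv
  unfold dbar
  rw [show (fun w => w ^ j * g w) = (fun w : ℂ => w ^ j) * g from rfl, h]
  simp only [ContinuousLinearMap.add_apply, ContinuousLinearMap.smul_apply,
    ContinuousLinearMap.coe_restrictScalars', ContinuousLinearMap.toSpanSingleton_apply,
    smul_eq_mul, one_mul]
  linear_combination (g z * ((j : ℂ) * z ^ (j - 1))) / 2 * Complex.I_mul_I

lemma norm_dbar_le (g : ℂ → ℂ) (z : ℂ) : ‖dbar g z‖ ≤ ‖fderiv ℝ g z‖ := by
  unfold dbar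
  have h1 := (fderiv ℝ g z).le_opNorm 1
  have h2 := (fderiv ℝ g z).le_opNorm Complex.I
  have h3 := norm_add_le (fderiv ℝ g z 1) (Complex.I * fderiv ℝ g z Complex.I)
  rw [norm_div]
  simp only [norm_mul, Complex.norm_I, norm_one, mul_one, one_mul, RCLike.norm_ofNat] at *
  linarith

theorem stmt8 (f u : ℂ → ℂ)
    (hf : Integrable (fun z => ‖f z‖ ^ 2 * Real.exp (‖z‖ ^ 2)) volume)
    (hu : LocallyIntegrable u volume)
    (hsol : IsDbarSol u f)
    (ε : ℝ) (hε : 0 < ε)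
    (huε : Integrable (fun z => ‖u z‖ ^ 2 * Real.exp (ε * ‖z‖ ^ 2)) volume) :
    ∀ j : ℕ, ∫ z : ℂ, z ^ j * f z = 0 := by
  intro j
  by_cases hfi : Integrable (fun z : ℂ => z ^ j * f z) volume
  swap
  · exact integral_undef hfi
  have hui := moment_int u hu.aestronglyMeasurable ε hε huε j
  let χ : ContDiffBump (0 : ℂ) := ⟨1, 2, one_pos, one_lt_two⟩
  let g : ℂ → ℂ := fun z => ((χ z : ℝ) : ℂ)
  have hg : ContDiff ℝ (⊤ : ℕ∞) g := Complex.ofRealCLM.contDiff.comp χ.contDiff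
  have hgs : HasCompactSupport g := χ.hasCompactSupport.comp_left (g := Complex.ofReal) (by simp)
  have hgn : ∀ z, ‖g z‖ ≤ 1 := fun z => by
    simp only [g, Complex.norm_real, Real.norm_eq_abs, abs_of_nonneg χ.nonneg]
    exact χ.le_one
  obtain ⟨C, hC⟩ := (hgs.fderiv (𝕜 := ℝ)).exists_bound_of_continuous
    (hg.continuous_fderiv (by simp))
  let c : ℕ → ℝ := fun n => ((n : ℝ) + 1)⁻¹
  have hc0 : ∀ n, c n ≠ 0 := fun n => by positivity
  have hcp : ∀ n, 0 < c n := fun n => by positivity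
  have hct : Tendsto c atTop (𝓝 0) := by
    simpa [c, one_div] using tendsto_one_div_add_atTop_nhds_zero_nat (𝕜 := ℝ)
  let G : ℕ → ℂ → ℂ := fun n z => g (c n • z)
  have hG : ∀ n, ContDiff ℝ (⊤ : ℕ∞) (G n) := fun n => hg.comp (contDiff_const_smul (c n))
  have hGs : ∀ n, HasCompactSupport (G n) := fun n => hgs.comp_smul (hc0 n)
  have hGd : ∀ n z, ‖dbar (G n) z‖ ≤ c n * C := fun n z => by
    refine (norm_dbar_le _ _).trans ?_
    have : fderiv ℝ (G n) z = c n • fderiv ℝ g (c n • z) := fderiv_comp_smul ..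
    rw [this, norm_smul, Real.norm_of_nonneg (hcp n).le]
    exact mul_le_mul_of_nonneg_left (hC _) (hcp n).le
  have key : ∀ n, ∫ z, (z ^ j * f z) * G n z = -∫ z, (z ^ j * u z) * dbar (G n) z := fun n => by
    have h := hsol (fun z => z ^ j * G n z) ((contDiff_id.pow j).mul (hG n)) (hGs n).mul_left
    convert h using 2
    · ext z; ring
    · congr 1; ext z
      rw [dbar_mul_pow _ ((hG n).differentiable (by simp))]; ring
  have lim1 : Tendsto (fun n => ∫ z, (z ^ j * f z) * G n z) atTop (𝓝 (∫ z, z ^ j * f z)) := by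
    refine tendsto_integral_of_dominated_convergence (fun z => ‖z ^ j * f z‖) ?_ hfi.norm ?_ ?_
    · exact fun n => hfi.aestronglyMeasurable.mul (hG n).continuous.aestronglyMeasurable
    · intro n
      refine Eventually.of_forall fun z => ?_
      rw [norm_mul]
      exact mul_le_of_le_one_right (norm_nonneg _) (hgn _)
    · refine Eventually.of_forall fun z => ?_
      have h1 : Tendsto (fun n => G n z) atTop (𝓝 (g ((0:ℝ) • z))) :=
        (hg.continuous.tendsto _).comp (hct.smul_const z)
      have h2 : g ((0:ℝ) • z) = 1 := by
        have : χ 0 = 1 := χ.one_of_mem_closedBall (by simp [χ])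
        simp [g, this]
      rw [h2] at h1
      simpa using h1.const_mul (z ^ j * f z)
  have lim2 : Tendsto (fun n => ∫ z, (z ^ j * f z) * G n z) atTop (𝓝 0) := by
    refine squeeze_zero_norm (a := fun n => c n * (C * ∫ z, ‖z ^ j * u z‖)) (fun n => ?_) ?_
    · rw [key, norm_neg]
      refine (norm_integral_le_of_norm_le (hui.norm.const_mul (c n * C))
        (Eventually.of_forall fun z => ?_)).trans (le_of_eq ?_)
      · rw [norm_mul, mul_comm]
        exact mul_le_mul_of_nonneg_right (hGd n z) (norm_nonneg _)
      · rw [integral_const_mul]; ring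
    · simpa using hct.mul_const (C * ∫ z, ‖z ^ j * u z‖)
  exact tendsto_nhds_unique lim1 lim2
end
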